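/- For every square-free positive integer n, the action of the Hecke group H(λ₄) on Q*(√-n) is intransitive: there exist elements z, w ∈ Q*(√-n) that do not lie in the same orbit. -/

import Mathlib

open Complex

/-- The set `Q*(√-n)` of complex numbers `(a + √n·i)/c` with `a, c ∈ ℤ`,
`c` even and nonzero, and `c ∣ a² + n`. -/
def Qstar (n : ℕ) : Set ℂ :=
  {z | ∃ a c : ℤ, c ≠ 0 ∧ 2 ∣ c ∧ c ∣ (a ^ 2 + (n : ℤ)) ∧
    z = ((a : ℂ) + Real.sqrt n * Complex.I) / (c : ℂ)}

/-- The Hecke transformation `x(z) = -1/(2z)`. -/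
noncomputable def heckeX (z : ℂ) : ℂ := -1 / (2 * z)

/-- The Hecke transformation `y(z) = -1/(2(z+1))`. -/
noncomputable def heckeY (z : ℂ) : ℂ := -1 / (2 * (z + 1))

/-- One step of the Hecke group action. -/
noncomputable def heckeStep (z w : ℂ) : Prop := w = heckeX z ∨ w = heckeY z

/-- Two elements lie in the same orbit if they are related by the equivalence
relation on `Q*(√-n)` generated by `z ~ x(z)` and `z ~ y(z)`. -/
def sameOrbit (n : ℕ) (z w : ℂ) : Prop :=
  Relation.EqvGen (fun u v => u ∈ Qstar n ∧ v ∈ Qstar n ∧ heckeStep u v) z w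

/-- The quadruplet `Q_α = {α, y(α), y²(α), y³(α)}`. -/
noncomputable def quad (α : ℂ) : Set ℂ :=
  {α, heckeY α, heckeY (heckeY α), heckeY (heckeY (heckeY α))}

/-- The orbit relation on the subtype `Q*(√-n)`. -/
def orbitRel (n : ℕ) (u v : {z : ℂ // z ∈ Qstar n}) : Prop :=
  sameOrbit n u.1 v.1

/-- `E_i(n)`: the number of positive even integers `C` dividing `i² + n`
with `2(i²+n)/C + C ≤ 3i`. -/
def Efun (i n : ℕ) : ℕ :=
  ((i ^ 2 + n).divisors.filter (fun C => 2 ∣ C ∧ 2 * (i ^ 2 + n) / C + C ≤ 3 * i)).card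

/-!
The transformations `x` and `y` are real Möbius transformations of positive determinant, so they
preserve the sign of the imaginary part. On the other hand `Q*(√-n)` contains no real number when
`n > 0` and is stable under complex conjugation, which reverses that sign; hence an element and its
conjugate always lie in different orbits.
-/

open scoped ComplexConjugate

lemma im_heckeX (z : ℂ) : (heckeX z).im = z.im / (2 * normSq z) := by
  have heckeX_eq : heckeX z = ((-(1 / 2) : ℝ) : ℂ) * z⁻¹ := by
    simp only [heckeX, div_eq_mul_inv, mul_inv]
    push_cast
    ring
  rw [heckeX_eq, im_ofReal_mul, inv_im]
  ring

lemma sign_im_heckeX (z : ℂ) : SignType.sign (heckeX z).im = SignType.sign z.im := by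
  rcases eq_or_ne z 0 with rfl | hz
  · simp [heckeX]
  · have scale_pos : 0 < (2 * normSq z)⁻¹ := inv_pos.2 (mul_pos two_pos (normSq_pos.2 hz))
    rw [im_heckeX, div_eq_mul_inv, sign_mul, sign_pos scale_pos, mul_one]

lemma heckeY_eq_heckeX_add_one (z : ℂ) : heckeY z = heckeX (z + 1) := rfl

lemma sign_im_heckeY (z : ℂ) : SignType.sign (heckeY z).im = SignType.sign z.im := by
  rw [heckeY_eq_heckeX_add_one, sign_im_heckeX, add_im, one_im, add_zero]

lemma heckeStep.sign_im_eq {z w : ℂ} (h : heckeStep z w) :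
    SignType.sign z.im = SignType.sign w.im := by
  rcases h with rfl | rfl
  · exact (sign_im_heckeX z).symm
  · exact (sign_im_heckeY z).symm

lemma sameOrbit.sign_im_eq {n : ℕ} {z w : ℂ} (h : sameOrbit n z w) :
    SignType.sign z.im = SignType.sign w.im :=
  Setoid.eqvGen_le (s := Setoid.ker fun u : ℂ => SignType.sign u.im)
    (fun _ _ step => step.2.2.sign_im_eq) h

lemma not_sameOrbit_conj (n : ℕ) {z : ℂ} (hz : z.im ≠ 0) : ¬ sameOrbit n z (conj z) := by
  intro h
  have sign_eq_neg : SignType.sign z.im = -SignType.sign z.im := by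
    simpa only [conj_im, Left.sign_neg] using h.sign_im_eq
  exact hz (sign_eq_zero_iff.1 (SignType.self_eq_neg_iff.1 sign_eq_neg))

lemma Qstar_nonempty (n : ℕ) : (Qstar n).Nonempty := by
  have two_dvd_sq_add : (2 : ℤ) ∣ (n : ℤ) ^ 2 + n := by
    simpa only [sq, mul_add, mul_one] using (Int.even_mul_succ_self n).two_dvd
  exact ⟨_, n, 2, two_ne_zero, dvd_rfl, two_dvd_sq_add, rfl⟩

lemma conj_mem_Qstar {n : ℕ} {z : ℂ} (hz : z ∈ Qstar n) : conj z ∈ Qstar n := by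
  obtain ⟨a, c, hc, two_dvd, dvd_norm, rfl⟩ := hz
  refine ⟨-a, -c, neg_ne_zero.2 hc, two_dvd.neg_right, by simpa using dvd_norm, ?_⟩
  simp only [map_div₀, map_add, map_mul, conj_ofReal, conj_I, map_intCast]
  push_cast
  rw [← neg_div_neg_eq]
  ring

lemma im_ne_zero_of_mem_Qstar {n : ℕ} (hn : 0 < n) {z : ℂ} (hz : z ∈ Qstar n) : z.im ≠ 0 := by
  obtain ⟨a, c, hc, -, -, rfl⟩ := hz
  have im_eq : (((a : ℂ) + Real.sqrt n * I) / (c : ℂ)).im = Real.sqrt n / c := by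
    simp [← ofReal_intCast, div_ofReal_im]
  rw [im_eq]
  exact div_ne_zero (Real.sqrt_ne_zero'.2 (Nat.cast_pos.2 hn)) (Int.cast_ne_zero.2 hc)

theorem stmt18_general (n : ℕ) (hn : 0 < n) :
    ∃ z ∈ Qstar n, ∃ w ∈ Qstar n, ¬ sameOrbit n z w := by
  obtain ⟨z, hz⟩ := Qstar_nonempty n
  exact ⟨z, hz, conj z, conj_mem_Qstar hz, not_sameOrbit_conj n (im_ne_zero_of_mem_Qstar hn hz)⟩

theorem stmt18 (n : ℕ) (hn : 0 < n) (hsf : Squarefree n) :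
    ∃ z ∈ Qstar n, ∃ w ∈ Qstar n, ¬ sameOrbit n z w :=
  stmt18_general n hn
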